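/- arXiv:1703.08830 — 2 statements merged into one kernel-verified Lean document; each statement's English description precedes it below -/
import Mathlib

section
/- Let m be a positive integer. For every n ≥ 0, in the ring Γ^(m) we have e_n = ∑_{μ ∈ P(n;m)} ε_μ c_μ^(m) h_μ e_{n−|μ|}, where for μ with |μ| = n the factor e_0 is interpreted as 1. -/
noncomputable section

open MvPolynomial

/-- The polynomial ring `ℤ[h_1, h_2, …, e_1, e_2, …]`: `Sum.inl i` is `h_i`, `Sum.inr j` is `e_j`. -/
abbrev SymR : Type := MvPolynomial (ℕ ⊕ ℕ) ℤ

/-- `h_i`, with the convention `h_0 = 1`. -/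
def Hh (i : ℕ) : SymR := if i = 0 then 1 else X (Sum.inl i)

/-- `e_j`, with the convention `e_0 = 1`. -/
def Ee (j : ℕ) : SymR := if j = 0 then 1 else X (Sum.inr j)

/-- `∑_{i=0}^d (-1)^i h_i e_{d-i}`. -/
def truncRel (d : ℕ) : SymR := ∑ i ∈ Finset.range (d + 1), (-1 : SymR) ^ i * Hh i * Ee (d - i)

/-- The ideal generated by `∑_{i=0}^d (-1)^i h_i e_{d-i}` for all `d ≥ 1` with `m ∤ d`. -/
def truncIdeal (m : ℕ) : Ideal SymR := Ideal.span {f | ∃ d : ℕ, 0 < d ∧ ¬ m ∣ d ∧ f = truncRel d}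

/-- The `m`'-truncated ring `Γ^(m)`. -/
abbrev Gamma (m : ℕ) := SymR ⧸ truncIdeal m

/-- Quotient map `R → Γ^(m)`. -/
def gmk (m : ℕ) : SymR →+* Gamma m := Ideal.Quotient.mk _

/-- `h_α = h_{α_1} ⋯ h_{α_ℓ}` for a finite sequence `α`. -/
def hprod (l : List ℕ) : SymR := (l.map Hh).prod

/-- `e_α = e_{α_1} ⋯ e_{α_ℓ}` for a finite sequence `α`. -/
def eprod (l : List ℕ) : SymR := (l.map Ee).prod

/-- A partition: a weakly decreasing finite sequence of positive integers. -/
def IsPartitionL (l : List ℕ) : Prop := l.Pairwise (· ≥ ·) ∧ ∀ x ∈ l, 0 < x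

/-- `c_λ`: the number of compositions of type `λ` (distinct rearrangements of `λ`). -/
def numComp (l : List ℕ) : ℕ := l.permutations.dedup.length

/-- `c_λ^(m)`: the number of compositions of type `λ` all of whose partial sums are
not divisible by `m`. -/
def numCompM (m : ℕ) (l : List ℕ) : ℕ :=
  (l.permutations.dedup.filter fun δ => decide (∀ j < δ.length, ¬ m ∣ (δ.take (j + 1)).sum)).length

/-- `ε_λ = (-1)^(|λ|-ℓ(λ))`. -/
def epsL (l : List ℕ) : ℤ := (-1) ^ (l.sum - l.length)

/-- `μ ∈ P(n;m)`: `μ` is a partition with `|μ| ≤ n` and `m ∣ n - |μ|`. -/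
def MemPnm (n m : ℕ) (μ : List ℕ) : Prop := IsPartitionL μ ∧ μ.sum ≤ n ∧ m ∣ (n - μ.sum)

/-!
For `m ∤ n` the relation of degree `n` reads `e_n = ∑_{k < n} (-1)^(n-k-1) h_{n-k} e_k`. Applying
it again to every `e_k` with `m ∤ k`, until only indices divisible by `m` remain, writes `e_n` as a
sum over the sequences of parts split off on the way. Let `δ` list these parts with the first one
split off in last place. Each index met on the way is a partial sum of `δ` plus the final index,
which is a multiple of `m`; so the process did not stop earlier exactly when no partial sum of `δ`
is divisible by `m`. The summand depends only on the partition underlying `δ`, and grouping the sum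
by this partition produces the coefficients `c_μ^(m)`.
-/

theorem sum_comp_eq_finsum_mem_card_fiber_nsmul {ι κ M : Type*} [DecidableEq κ] [AddCommMonoid M]
    {s : Finset ι} {t : Set κ} {g : ι → κ} (hg : ∀ i ∈ s, g i ∈ t) (f : κ → M) :
    ∑ i ∈ s, f (g i) = ∑ᶠ b ∈ t, (s.filter (g · = b)).card • f b := by
  rw [Finset.sum_comp]
  refine (finsum_mem_eq_sum_of_inter_support_eq _ ?_).symm
  ext b
  simp only [Set.mem_inter_iff, Function.mem_support, Finset.mem_coe, Finset.mem_image]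
  refine and_congr_left fun hb => ⟨fun _ => ?_, ?_⟩
  · obtain ⟨i, hi⟩ : (s.filter (g · = b)).Nonempty :=
      Finset.card_ne_zero.1 fun hcard => hb (by rw [hcard, zero_nsmul])
    exact ⟨i, Finset.mem_filter.1 hi⟩
  · rintro ⟨i, hi, rfl⟩
    exact hg i hi

section TruncatedCompositions

variable {m n : ℕ} {δ : List ℕ}

/-- No nonempty partial sum of the sequence `δ` is divisible by `m`; this is the condition on
compositions counted by `numCompM`. -/
def PartialSumsNotDvd (m : ℕ) (δ : List ℕ) : Prop :=
  ∀ j < δ.length, ¬ m ∣ (δ.take (j + 1)).sum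

instance (m : ℕ) : DecidablePred (PartialSumsNotDvd m) :=
  fun δ => inferInstanceAs (Decidable (∀ j < δ.length, ¬ m ∣ (δ.take (j + 1)).sum))

theorem PartialSumsNotDvd.nil : PartialSumsNotDvd m [] := by simp [PartialSumsNotDvd]

theorem partialSumsNotDvd_append_singleton {a : ℕ} :
    PartialSumsNotDvd m (δ ++ [a]) ↔ PartialSumsNotDvd m δ ∧ ¬ m ∣ (δ ++ [a]).sum := by
  have take_prefix : ∀ j < δ.length, (δ ++ [a]).take (j + 1) = δ.take (j + 1) :=
    fun j hj => List.take_append_of_le_length hj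
  have take_all : (δ ++ [a]).take (δ.length + 1) = δ ++ [a] :=
    List.take_of_length_le (by simp)
  simp only [PartialSumsNotDvd, List.length_append, List.length_singleton, Nat.forall_lt_succ_right,
    take_all]
  exact and_congr_left fun _ => forall₂_congr fun j hj => by rw [take_prefix j hj]

theorem PartialSumsNotDvd.not_dvd_sum (h : PartialSumsNotDvd m δ) (hδ : δ ≠ []) :
    ¬ m ∣ δ.sum := by
  rw [← List.dropLast_append_getLast hδ] at h ⊢
  exact (partialSumsNotDvd_append_singleton.1 h).2

/-- The compositions `δ` with `|δ| ≤ n` and `m ∣ n - |δ|` none of whose partial sums is divisible by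
`m`: they index the terms obtained from `e_n` by applying the relations as long as possible.
Compositions are encoded as lists of positive integers. -/
def truncCompositions (m n : ℕ) : Finset (List ℕ) :=
  ((Finset.range (n + 1)).biUnion fun k =>
    (Finset.univ : Finset (Composition k)).image Composition.blocks).filter
      fun δ => m ∣ n - δ.sum ∧ PartialSumsNotDvd m δ

theorem mem_truncCompositions : δ ∈ truncCompositions m n ↔
    (∀ x ∈ δ, 0 < x) ∧ δ.sum ≤ n ∧ m ∣ n - δ.sum ∧ PartialSumsNotDvd m δ := by
  simp only [truncCompositions, Finset.mem_filter, Finset.mem_biUnion, Finset.mem_range,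
    Finset.mem_image, Finset.mem_univ, true_and, ← and_assoc]
  refine and_congr_left fun _ => and_congr_left fun _ => ⟨?_, ?_⟩
  · rintro ⟨k, hk, c, rfl⟩
    exact ⟨fun x => c.blocks_pos, by rw [c.blocks_sum]; lia⟩
  · rintro ⟨hpos, hsum⟩
    exact ⟨δ.sum, by lia, ⟨δ, hpos _, rfl⟩, rfl⟩

theorem truncCompositions_of_dvd (hn : m ∣ n) : truncCompositions m n = {[]} := by
  ext δ
  rw [mem_truncCompositions, Finset.mem_singleton]
  refine ⟨fun ⟨_, hle, hdvd, hδ⟩ => ?_, ?_⟩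
  · by_contra hne
    exact hδ.not_dvd_sum hne ((Nat.dvd_sub_iff_right hle hn).1 hdvd)
  · rintro rfl
    simpa using ⟨hn, PartialSumsNotDvd.nil⟩

theorem append_singleton_mem_truncCompositions {a : ℕ} (hn : ¬ m ∣ n) :
    δ ++ [a] ∈ truncCompositions m n ↔ 0 < a ∧ a ≤ n ∧ δ ∈ truncCompositions m (n - a) := by
  simp only [mem_truncCompositions, partialSumsNotDvd_append_singleton, List.sum_append,
    List.sum_singleton, List.mem_append, List.mem_singleton, or_imp, forall_and, forall_eq]
  have hrest : n - (δ.sum + a) = n - a - δ.sum := by lia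
  rw [hrest]
  constructor
  · rintro ⟨⟨hpos, ha⟩, hle, hdvd, hδ, -⟩
    exact ⟨ha, by lia, hpos, by lia, hdvd, hδ⟩
  · rintro ⟨ha, han, hpos, hle, hdvd, hδ⟩
    have hsum : δ.sum + a ≤ n := by lia
    refine ⟨⟨hpos, ha⟩, hsum, hdvd, hδ, fun h => hn ?_⟩
    rwa [← hrest, Nat.dvd_sub_iff_left hsum h] at hdvd

theorem truncCompositions_of_not_dvd (hn : ¬ m ∣ n) : truncCompositions m n =
    (Finset.range n).biUnion fun k => (truncCompositions m k).image (· ++ [n - k]) := by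
  ext δ
  simp only [Finset.mem_biUnion, Finset.mem_range, Finset.mem_image]
  constructor
  · intro hδ
    rcases List.eq_nil_or_concat' δ with rfl | ⟨γ, a, rfl⟩
    · exact absurd (by simpa using (mem_truncCompositions.1 hδ).2.2.1) hn
    · obtain ⟨ha, han, hγ⟩ := (append_singleton_mem_truncCompositions hn).1 hδ
      exact ⟨n - a, by lia, γ, hγ, by rw [Nat.sub_sub_self han]⟩
  · rintro ⟨k, hk, γ, hγ, rfl⟩
    rw [append_singleton_mem_truncCompositions hn, Nat.sub_sub_self hk.le]
    exact ⟨by lia, by lia, hγ⟩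

theorem sum_truncCompositions_of_not_dvd {M : Type*} [AddCommMonoid M] (hn : ¬ m ∣ n)
    (f : List ℕ → M) : ∑ δ ∈ truncCompositions m n, f δ =
      ∑ k ∈ Finset.range n, ∑ δ ∈ truncCompositions m k, f (δ ++ [n - k]) := by
  rw [truncCompositions_of_not_dvd hn, Finset.sum_biUnion]
  · exact Finset.sum_congr rfl fun k _ => Finset.sum_image (List.append_left_injective _).injOn
  · intro k hk l hl hkl
    simp only [Finset.coe_range, Set.mem_Iio] at hk hl
    refine Finset.disjoint_left.2 fun δ hδk hδl => ?_
    obtain ⟨γ, -, rfl⟩ := Finset.mem_image.1 hδk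
    obtain ⟨γ', -, h⟩ := Finset.mem_image.1 hδl
    have hlast : n - l = n - k := by simpa using (List.append_inj' h rfl).2
    lia

theorem eq_sum_truncCompositions_of_recurrence {A M : Type*} [CommSemiring A] [AddCommMonoid M]
    [Module A M] {a : ℕ → A} {e : ℕ → M}
    (he : ∀ n, ¬ m ∣ n → e n = ∑ k ∈ Finset.range n, a (n - k) • e k) (n : ℕ) :
    e n = ∑ δ ∈ truncCompositions m n, (δ.map a).prod • e (n - δ.sum) := by
  induction n using Nat.strong_induction_on with
  | _ n ih =>
  by_cases hn : m ∣ n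
  · simp [truncCompositions_of_dvd hn]
  · rw [he n hn, sum_truncCompositions_of_not_dvd hn]
    refine Finset.sum_congr rfl fun k hk => ?_
    rw [Finset.mem_range] at hk
    conv_lhs => rw [ih k hk, Finset.smul_sum]
    refine Finset.sum_congr rfl fun δ _ => ?_
    have hrest : n - (δ ++ [n - k]).sum = k - δ.sum := by
      rw [List.sum_append, List.sum_singleton]; lia
    rw [hrest, smul_smul, List.map_append, List.prod_append, List.map_singleton,
      List.prod_singleton, mul_comm]

end TruncatedCompositions

section CompositionType

variable {m n : ℕ} {δ μ : List ℕ}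

/-- The type of a composition: its parts in weakly decreasing order. -/
def compositionType (δ : List ℕ) : List ℕ := δ.insertionSort (· ≥ ·)

theorem compositionType_perm (δ : List ℕ) : (compositionType δ).Perm δ :=
  List.perm_insertionSort _ _

theorem compositionType_eq_iff_perm (hμ : IsPartitionL μ) : compositionType δ = μ ↔ δ.Perm μ := by
  refine ⟨?_, fun h => ?_⟩
  · rintro rfl
    exact (compositionType_perm δ).symm
  · exact ((compositionType_perm δ).trans h).eq_of_pairwise' (List.pairwise_insertionSort _ _) hμ.1

theorem memPnm_compositionType (hδ : δ ∈ truncCompositions m n) :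
    MemPnm n m (compositionType δ) := by
  obtain ⟨hpos, hle, hdvd, -⟩ := mem_truncCompositions.1 hδ
  have hperm := compositionType_perm δ
  rw [MemPnm, hperm.sum_eq]
  exact ⟨⟨List.pairwise_insertionSort _ _, fun x hx => hpos x (hperm.mem_iff.1 hx)⟩, hle, hdvd⟩

theorem numCompM_eq_card_fiber_compositionType (hμ : MemPnm n m μ) :
    numCompM m μ = ((truncCompositions m n).filter (compositionType · = μ)).card := by
  rw [numCompM, ← List.toFinset_card_of_nodup ((List.nodup_dedup _).filter _)]
  congr 1
  ext δ
  simp only [List.mem_toFinset, List.mem_filter, List.mem_dedup, List.mem_permutations,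
    decide_eq_true_eq, Finset.mem_filter, compositionType_eq_iff_perm hμ.1, mem_truncCompositions]
  refine ⟨fun ⟨hperm, hδ⟩ => ⟨⟨fun x hx => hμ.1.2 x (hperm.mem_iff.1 hx), ?_, ?_, hδ⟩, hperm⟩,
    fun ⟨⟨_, _, _, hδ⟩, hperm⟩ => ⟨hperm, hδ⟩⟩
  · exact hperm.sum_eq ▸ hμ.2.1
  · exact hperm.sum_eq ▸ hμ.2.2

end CompositionType

section TruncatedRing

variable {m n : ℕ} {δ : List ℕ}

theorem hprod_compositionType (δ : List ℕ) : hprod (compositionType δ) = hprod δ :=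
  ((compositionType_perm δ).map Hh).prod_eq

theorem epsL_compositionType (δ : List ℕ) : epsL (compositionType δ) = epsL δ := by
  rw [epsL, epsL, (compositionType_perm δ).sum_eq, (compositionType_perm δ).length_eq]

theorem gmk_truncRel (hn : ¬ m ∣ n) : gmk m (truncRel n) = 0 := by
  have hpos : 0 < n := Nat.pos_of_ne_zero (by rintro rfl; exact hn (dvd_zero m))
  exact Ideal.Quotient.eq_zero_iff_mem.2 (Ideal.subset_span ⟨n, hpos, hn, rfl⟩)

theorem truncRel_eq_sum_add (n : ℕ) : truncRel n =
    ∑ k ∈ Finset.range n, (-1) ^ (n - k) * Hh (n - k) * Ee k + Ee n := by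
  rw [truncRel, ← Finset.sum_flip, Finset.sum_range_succ]
  congr 1
  · refine Finset.sum_congr rfl fun k hk => ?_
    rw [Nat.sub_sub_self (Finset.mem_range.1 hk).le]
  · simp [Hh]

theorem gmk_Ee_eq_sum_range (hn : ¬ m ∣ n) : gmk m (Ee n) =
    ∑ k ∈ Finset.range n, gmk m ((-1) ^ (n - k + 1) * Hh (n - k)) • gmk m (Ee k) := by
  have hrel := gmk_truncRel hn
  rw [truncRel_eq_sum_add, map_add, map_sum] at hrel
  rw [eq_neg_of_add_eq_zero_right hrel, ← Finset.sum_neg_distrib]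
  refine Finset.sum_congr rfl fun k _ => ?_
  rw [smul_eq_mul, ← map_mul, ← map_neg, pow_succ]
  congr 1
  ring

-- Positivity of the parts makes the truncated subtraction `|δ| - ℓ(δ)` an honest one.
theorem epsL_eq_neg_one_pow_add (hδ : ∀ x ∈ δ, 0 < x) :
    epsL δ = (-1) ^ (δ.sum + δ.length) := by
  have hle : δ.length ≤ δ.sum := List.length_le_sum_of_one_le δ hδ
  have hparity : δ.sum + δ.length = δ.sum - δ.length + 2 * δ.length := by lia
  rw [epsL, hparity, pow_add, (even_two_mul _).neg_one_pow, mul_one]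

theorem prod_map_neg_one_pow_mul_Hh (δ : List ℕ) :
    (δ.map fun i => (-1) ^ (i + 1) * Hh i).prod = (-1) ^ (δ.sum + δ.length) * hprod δ := by
  induction δ with
  | nil => simp [hprod]
  | cons a δ ih =>
    rw [hprod] at ih ⊢
    simp only [List.map_cons, List.prod_cons, List.sum_cons, List.length_cons, ih]
    ring

theorem gmk_Ee_eq_sum_truncCompositions (m n : ℕ) : gmk m (Ee n) =
    ∑ δ ∈ truncCompositions m n, epsL δ • gmk m (hprod δ * Ee (n - δ.sum)) := by
  rw [eq_sum_truncCompositions_of_recurrence (e := fun k => gmk m (Ee k))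
    (a := fun i => gmk m ((-1) ^ (i + 1) * Hh i)) (fun _ => gmk_Ee_eq_sum_range) n]
  refine Finset.sum_congr rfl fun δ hδ => ?_
  have hprod_eq : (δ.map fun i => gmk m ((-1) ^ (i + 1) * Hh i)).prod =
      gmk m ((-1) ^ (δ.sum + δ.length) * hprod δ) := by
    rw [← prod_map_neg_one_pow_mul_Hh, map_list_prod, List.map_map, Function.comp_def]
  rw [hprod_eq, epsL_eq_neg_one_pow_add (mem_truncCompositions.1 hδ).1, ← map_zsmul, smul_eq_mul,
    ← map_mul, zsmul_eq_mul, mul_assoc]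
  push_cast
  rfl

end TruncatedRing

theorem stmt1 {m : ℕ} (hm : 0 < m) (n : ℕ) :
    gmk m (Ee n) =
      ∑ᶠ μ ∈ {μ : List ℕ | MemPnm n m μ},
        (epsL μ * (numCompM m μ : ℤ)) • gmk m (hprod μ * Ee (n - μ.sum)) := by
  let term (μ : List ℕ) : Gamma m := epsL μ • gmk m (hprod μ * Ee (n - μ.sum))
  have term_compositionType (δ : List ℕ) : term (compositionType δ) = term δ := by
    simp only [term, epsL_compositionType, hprod_compositionType, (compositionType_perm δ).sum_eq]
  calc gmk m (Ee n)
      = ∑ δ ∈ truncCompositions m n, term (compositionType δ) := by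
        simp only [term_compositionType]
        exact gmk_Ee_eq_sum_truncCompositions m n
    _ = ∑ᶠ μ ∈ {μ : List ℕ | MemPnm n m μ},
          ((truncCompositions m n).filter (compositionType · = μ)).card • term μ :=
        sum_comp_eq_finsum_mem_card_fiber_nsmul (fun _ => memPnm_compositionType) term
    _ = _ := finsum_mem_congr rfl fun μ hμ => by
        rw [← numCompM_eq_card_fiber_compositionType hμ, mul_comm, mul_smul, natCast_zsmul]
end
end

section
/- Let m be a positive integer, let λ be a partition of n, and let b = ⌊n/m⌋. For 1 ≤ i ≤ b let P_i be the set of compositions (μ_1,...,μ_{ℓ(λ)}) of type λ such that μ_1 + ··· + μ_r = mi for some 1 ≤ r ≤ ℓ(λ), and for 1 ≤ j ≤ b let W_j(λ) = {A ∈ W(λ) : len(A) = j+1}. Then for each 1 ≤ j ≤ b: ∑_{1 ≤ i_1 < ··· < i_j ≤ b} |P_{i_1} ∩ ··· ∩ P_{i_j}| = ∑_{A ∈ W_j(λ)} c_A. -/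
noncomputable section

/-- Membership of `A = (δ^(1), …, δ^(r), ξ)` in `W(λ)`: a nonempty finite sequence of
partitions whose parts taken together rearrange to `λ`, and all terms except possibly the
last one are nonempty with size divisible by `m`.  Here `len(A) = A.length = r + 1`. -/
def Wmem (m : ℕ) (lam : List ℕ) (A : List (List ℕ)) : Prop :=
  A ≠ [] ∧ (∀ l ∈ A, IsPartitionL l) ∧ (∀ l ∈ A.dropLast, l ≠ [] ∧ m ∣ l.sum) ∧
  List.Perm A.flatten lam

/-- `c_A = c_{δ^(1)} ⋯ c_{δ^(r)} ⋅ c_ξ`. -/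
def cAprod (A : List (List ℕ)) : ℕ := (A.map numComp).prod

/-!
Both sides count the sequences `B = (b₁, …, b_j, x)` of `j + 1` compositions whose concatenation is
a composition of type `λ` and whose first `j` terms are nonempty of size divisible by `m`.
Sorting each term sends `B` to some `A ∈ W_j(λ)`, and exactly `c_A` sequences lie over `A`.
On the other hand `B` is determined by its concatenation `μ` together with the set of sums
`|b₁|, |b₁| + |b₂|, …, |b₁| + ⋯ + |b_j|`: these are prefix sums of `μ`, and because the parts are
positive any `j` prefix sums of `μ` arise in this way from a unique `B`. Such a set of prefix sums,
all divisible by `m`, is a set `{m i₁, …, m i_j}` with `μ ∈ P_{i₁} ∩ ⋯ ∩ P_{i_j}`.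
-/

section Counting

lemma ncard_eq_sum_ncard_fiberwise {α β : Type*} {s : Set α} (hs : s.Finite) {t : Finset β}
    {f : α → β} (hf : Set.MapsTo f s t) : s.ncard = ∑ b ∈ t, {a ∈ s | f a = b}.ncard := by
  classical
  lift s to Finset α using hs
  rw [Set.ncard_coe_finset, Finset.card_eq_sum_card_fiberwise hf]
  refine Finset.sum_congr rfl fun b _ => ?_
  rw [← Set.ncard_coe_finset, Finset.coe_filter]
  rfl

lemma finite_setOf_perm {α : Type*} (l : List α) : {l' : List α | l'.Perm l}.Finite := by
  simpa only [List.mem_permutations] using l.permutations.finite_toSet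

lemma ncard_setOf_perm_eq_numComp (a : List ℕ) : {b : List ℕ | b.Perm a}.ncard = numComp a := by
  rw [numComp, ← List.card_toFinset, ← Set.ncard_coe_finset]
  simp

lemma map_mul_Icc_div {m : ℕ} (hm : 0 < m) (n : ℕ) :
    (Finset.Icc 1 (n / m)).map ⟨(m * ·), mul_right_injective₀ hm.ne'⟩ =
      {s ∈ Finset.Icc 1 n | m ∣ s} := by
  ext s
  simp only [Finset.mem_map, Finset.mem_Icc, Function.Embedding.coeFn_mk, Finset.mem_filter,
    Nat.le_div_iff_mul_le hm]
  constructor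
  · rintro ⟨i, ⟨hi, hin⟩, rfl⟩
    exact ⟨⟨Nat.mul_pos hm hi, by rwa [mul_comm]⟩, dvd_mul_right m i⟩
  · rintro ⟨⟨hs, hsn⟩, i, rfl⟩
    exact ⟨i, ⟨Nat.pos_of_mul_pos_left hs, by rwa [mul_comm]⟩, rfl⟩

end Counting

section PrefixSums

/-- The set of sums of the nonempty prefixes of `l`. Unlike in `List.partialSums`, the sum of the
empty prefix is left out. -/
def prefixSums (l : List ℕ) : Finset ℕ :=
  (Finset.Icc 1 l.length).image fun r => (l.take r).sum

variable {l l' : List ℕ} {s : ℕ}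

lemma mem_prefixSums : s ∈ prefixSums l ↔ ∃ r, 1 ≤ r ∧ r ≤ l.length ∧ (l.take r).sum = s := by
  simp only [prefixSums, Finset.mem_image, Finset.mem_Icc, and_assoc]

lemma mem_prefixSums_iff_exists_append :
    s ∈ prefixSums l ↔ ∃ b c, b ≠ [] ∧ b ++ c = l ∧ b.sum = s := by
  rw [mem_prefixSums]
  constructor
  · rintro ⟨r, hr, hrl, rfl⟩
    have hne : l.take r ≠ [] := by
      rw [← List.length_pos_iff, List.length_take]
      omega
    exact ⟨l.take r, l.drop r, hne, List.take_append_drop r l, rfl⟩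
  · rintro ⟨b, c, hb, rfl, rfl⟩
    refine ⟨b.length, List.length_pos_iff.2 hb, ?_, by rw [List.take_left]⟩
    simp only [List.length_append, Nat.le_add_right]

@[simp]
lemma prefixSums_nil : prefixSums [] = ∅ := rfl

@[simp]
lemma prefixSums_singleton (x : ℕ) : prefixSums [x] = {x} := by
  simp [prefixSums]

lemma prefixSums_append (b c : List ℕ) :
    prefixSums (b ++ c) = prefixSums b ∪ (prefixSums c).map (addLeftEmbedding b.sum) := by
  ext s
  simp only [Finset.mem_union, Finset.mem_map, addLeftEmbedding_apply, mem_prefixSums,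
    List.length_append]
  constructor
  · rintro ⟨r, hr, hrl, rfl⟩
    rcases le_or_gt r b.length with hrb | hbr
    · exact .inl ⟨r, hr, hrb, by rw [List.take_append_of_le_length hrb]⟩
    · refine .inr ⟨_, ⟨r - b.length, by omega, by omega, rfl⟩, ?_⟩
      rw [List.take_append, List.take_of_length_le hbr.le, List.sum_append]
  · rintro (⟨r, hr, hrb, rfl⟩ | ⟨_, ⟨r, hr, hrc, rfl⟩, rfl⟩)
    · exact ⟨r, hr, by omega, by rw [List.take_append_of_le_length hrb]⟩
    · exact ⟨b.length + r, by omega, by omega, by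
        rw [List.take_length_add_append, List.sum_append]⟩

lemma prefixSums_cons (x : ℕ) (l : List ℕ) :
    prefixSums (x :: l) = insert x ((prefixSums l).map (addLeftEmbedding x)) := by
  rw [← List.singleton_append, prefixSums_append, prefixSums_singleton, List.sum_singleton,
    Finset.insert_eq]

lemma sum_mem_prefixSums (hl : l ≠ []) : l.sum ∈ prefixSums l :=
  mem_prefixSums_iff_exists_append.2 ⟨l, [], hl, List.append_nil l, rfl⟩

lemma le_sum_of_mem_prefixSums (hs : s ∈ prefixSums l) : s ≤ l.sum := by
  obtain ⟨b, c, -, rfl, rfl⟩ := mem_prefixSums_iff_exists_append.1 hs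
  rw [List.sum_append]
  exact Nat.le_add_right _ _

lemma pos_of_mem_prefixSums (hl : ∀ x ∈ l, 0 < x) (hs : s ∈ prefixSums l) : 0 < s := by
  obtain ⟨b, c, hb, rfl, rfl⟩ := mem_prefixSums_iff_exists_append.1 hs
  exact List.sum_pos b (fun x hx => hl x (List.mem_append_left c hx)) hb

lemma forall_mem_prefixSums_dvd_iff {m : ℕ} :
    (∀ s ∈ prefixSums l, m ∣ s) ↔ ∀ x ∈ l, m ∣ x := by
  induction l with
  | nil => simp
  | cons x l ih =>
    simp only [prefixSums_cons, Finset.forall_mem_insert, Finset.forall_mem_map,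
      addLeftEmbedding_apply, List.forall_mem_cons, ← ih]
    exact and_congr_right fun hx => forall₂_congr fun s _ => Nat.dvd_add_right hx

lemma notMem_map_addLeftEmbedding_prefixSums (x : ℕ) (hl : ∀ y ∈ l, 0 < y) :
    x ∉ (prefixSums l).map (addLeftEmbedding x) := by
  simp only [Finset.mem_map, addLeftEmbedding_apply, not_exists, not_and]
  intro s hs
  have := pos_of_mem_prefixSums hl hs
  omega

lemma card_prefixSums (hl : ∀ x ∈ l, 0 < x) : (prefixSums l).card = l.length := by
  induction l with
  | nil => rfl
  | cons x l ih =>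
    have hl' := (List.forall_mem_cons.1 hl).2
    have hx := notMem_map_addLeftEmbedding_prefixSums x hl'
    rw [prefixSums_cons, Finset.card_insert_of_notMem hx, Finset.card_map, ih hl',
      List.length_cons]

lemma head_le_of_mem_prefixSums {x : ℕ} (hs : s ∈ prefixSums (x :: l)) : x ≤ s := by
  simp only [prefixSums_cons, Finset.mem_insert, Finset.mem_map, addLeftEmbedding_apply] at hs
  omega

lemma head_mem_prefixSums (x : ℕ) (l : List ℕ) : x ∈ prefixSums (x :: l) := by
  rw [prefixSums_cons]
  exact Finset.mem_insert_self _ _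

lemma eq_of_prefixSums_eq (hl : ∀ x ∈ l, 0 < x) (hl' : ∀ x ∈ l', 0 < x)
    (h : prefixSums l = prefixSums l') : l = l' := by
  induction l generalizing l' with
  | nil =>
    have hcard := card_prefixSums hl'
    rw [← h, prefixSums_nil, Finset.card_empty] at hcard
    exact (List.eq_nil_of_length_eq_zero hcard.symm).symm
  | cons x l ih =>
    cases l' with
    | nil => exact absurd (head_mem_prefixSums x l) (h ▸ Finset.notMem_empty x)
    | cons y l' =>
      obtain rfl : x = y := le_antisymm
        (head_le_of_mem_prefixSums (h ▸ head_mem_prefixSums y l'))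
        (head_le_of_mem_prefixSums (h ▸ head_mem_prefixSums x l))
      replace hl := (List.forall_mem_cons.1 hl).2
      replace hl' := (List.forall_mem_cons.1 hl').2
      rw [prefixSums_cons, prefixSums_cons] at h
      have hmap := congrArg (Finset.erase · x) h
      simp only [Finset.erase_insert (notMem_map_addLeftEmbedding_prefixSums x hl),
        Finset.erase_insert (notMem_map_addLeftEmbedding_prefixSums x hl')] at hmap
      rw [ih hl hl' (Finset.map_injective _ hmap)]

lemma exists_prefixSums_eq (T : Finset ℕ) (hT : ∀ t ∈ T, 0 < t) :
    ∃ l : List ℕ, (∀ x ∈ l, 0 < x) ∧ prefixSums l = T := by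
  induction T using Finset.induction_on_max with
  | empty => exact ⟨[], by simp, rfl⟩
  | insert t T hmax ih =>
    obtain ⟨ht, hT⟩ := Finset.forall_mem_insert _ _ _ |>.1 hT
    obtain ⟨l, hl, rfl⟩ := ih hT
    have hlt : l.sum < t := by
      rcases eq_or_ne l [] with rfl | hne
      · exact ht
      · exact hmax _ (sum_mem_prefixSums hne)
    refine ⟨l ++ [t - l.sum], ?_, ?_⟩
    · simpa [or_imp, forall_and] using ⟨hl, hlt⟩
    · rw [prefixSums_append, prefixSums_singleton, Finset.map_singleton, addLeftEmbedding_apply,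
        Nat.add_sub_cancel' hlt.le, Finset.union_comm, Finset.insert_eq]

end PrefixSums

section Splitting

variable {D D' : List (List ℕ)} {x x' : List ℕ}

lemma prefixSums_map_sum_subset (hD : ∀ b ∈ D, b ≠ []) (x : List ℕ) :
    prefixSums (D.map List.sum) ⊆ prefixSums (D.flatten ++ x) := by
  induction D with
  | nil => simp
  | cons b D ih =>
    obtain ⟨hb, hD⟩ := List.forall_mem_cons.1 hD
    rw [List.map_cons, prefixSums_cons, List.flatten_cons, List.append_assoc, prefixSums_append,
      Finset.insert_subset_iff]
    exact ⟨Finset.mem_union_left _ (sum_mem_prefixSums hb),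
      (Finset.map_subset_map.2 (ih hD)).trans Finset.subset_union_right⟩

lemma append_inj_of_sum_eq {a b c d : List ℕ} (hpos : ∀ y ∈ a ++ b, 0 < y)
    (h : a ++ b = c ++ d) (hsum : a.sum = c.sum) : a = c ∧ b = d := by
  have eq_nil_of_sum_eq {u v : List ℕ} (hv : ∀ y ∈ v, 0 < y) (huv : (u ++ v).sum = u.sum) :
      v = [] := by
    by_contra hne
    have := List.sum_pos v hv hne
    rw [List.sum_append] at huv
    omega
  rcases List.append_eq_append_iff.1 h with ⟨v, rfl, rfl⟩ | ⟨v, rfl, rfl⟩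
  · obtain rfl := eq_nil_of_sum_eq (u := a) (fun y hy => hpos y (by simp [hy])) hsum.symm
    simp
  · obtain rfl := eq_nil_of_sum_eq (u := c) (fun y hy => hpos y (by simp [hy])) hsum
    simp

lemma flatten_append_inj_of_map_sum_eq (hpos : ∀ y ∈ D.flatten ++ x, 0 < y)
    (h : D.flatten ++ x = D'.flatten ++ x') (hsum : D.map List.sum = D'.map List.sum) :
    D = D' ∧ x = x' := by
  induction D generalizing D' with
  | nil =>
    obtain rfl : D' = [] := List.map_eq_nil_iff.1 hsum.symm
    exact ⟨rfl, h⟩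
  | cons b D ih =>
    cases D' with
    | nil => simp at hsum
    | cons b' D' =>
      rw [List.map_cons, List.map_cons, List.cons.injEq] at hsum
      rw [List.flatten_cons, List.flatten_cons, List.append_assoc, List.append_assoc] at h
      rw [List.flatten_cons, List.append_assoc] at hpos
      obtain ⟨rfl, htail⟩ := append_inj_of_sum_eq hpos h hsum.1
      obtain ⟨rfl, rfl⟩ := ih (fun y hy => hpos y (List.mem_append_right b hy)) htail hsum.2
      exact ⟨rfl, rfl⟩

lemma exists_flatten_append_eq {μ a : List ℕ} (ha : ∀ y ∈ a, 0 < y)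
    (h : prefixSums a ⊆ prefixSums μ) :
    ∃ (D : List (List ℕ)) (x : List ℕ),
      (∀ b ∈ D, b ≠ []) ∧ D.map List.sum = a ∧ D.flatten ++ x = μ := by
  induction a generalizing μ with
  | nil => exact ⟨[], μ, by simp⟩
  | cons y a ih =>
    replace ha := (List.forall_mem_cons.1 ha).2
    rw [prefixSums_cons, Finset.insert_subset_iff] at h
    obtain ⟨b, ν, hb, rfl, rfl⟩ := mem_prefixSums_iff_exists_append.1 h.1
    have hν : prefixSums a ⊆ prefixSums ν := by
      intro s hs
      have hsμ := h.2 (Finset.mem_map_of_mem _ hs)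
      rw [prefixSums_append, Finset.mem_union, Finset.mem_map'] at hsμ
      refine hsμ.resolve_left fun hsb => ?_
      have hle := le_sum_of_mem_prefixSums hsb
      have hpos := pos_of_mem_prefixSums ha hs
      rw [addLeftEmbedding_apply] at hle
      omega
    obtain ⟨D, x, hD, rfl, rfl⟩ := ih ha hν
    exact ⟨b :: D, x, List.forall_mem_cons.2 ⟨hb, hD⟩, rfl, by simp⟩

end Splitting

section BlockSeqs

/-- The sequences `(b₁, …, b_j, x)` of lists whose concatenation rearranges `lam` and whose first
`j` terms are nonempty with sum divisible by `m`: the elements of `W_j(lam)`, except that the terms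
need not be sorted. -/
def blockSeqs (m : ℕ) (lam : List ℕ) (j : ℕ) : Set (List (List ℕ)) :=
  {B | B.length = j + 1 ∧ (∀ b ∈ B.dropLast, b ≠ [] ∧ m ∣ b.sum) ∧ B.flatten.Perm lam}

/-- The prefix sums of `B.flatten` at the boundaries between consecutive terms of `B`. -/
def cutSums (B : List (List ℕ)) : Finset ℕ := prefixSums (B.dropLast.map List.sum)

variable {m j : ℕ} {lam : List ℕ} {B B' : List (List ℕ)}

lemma concat_mem_blockSeqs {D : List (List ℕ)} {x : List ℕ} :
    D ++ [x] ∈ blockSeqs m lam j ↔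
      D.length = j ∧ (∀ b ∈ D, b ≠ [] ∧ m ∣ b.sum) ∧ (D.flatten ++ x).Perm lam := by
  simp [blockSeqs]

lemma cutSums_concat (D : List (List ℕ)) (x : List ℕ) :
    cutSums (D ++ [x]) = prefixSums (D.map List.sum) := by
  rw [cutSums, List.dropLast_concat]

lemma exists_eq_concat_of_mem_blockSeqs (hB : B ∈ blockSeqs m lam j) :
    ∃ D x, B = D ++ [x] :=
  (List.eq_nil_or_concat' B).resolve_left fun h => by simp [blockSeqs, h] at hB

lemma pos_of_mem_flatten_of_mem_blockSeqs (hlam : ∀ y ∈ lam, 0 < y) (hB : B ∈ blockSeqs m lam j) :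
    ∀ y ∈ B.flatten, 0 < y :=
  fun y hy => hlam y (hB.2.2.mem_iff.1 hy)

lemma sum_pos_of_mem_blockSeqs (hlam : ∀ y ∈ lam, 0 < y) (hB : B ∈ blockSeqs m lam j) :
    ∀ s ∈ B.dropLast.map List.sum, 0 < s := by
  simp only [List.forall_mem_map]
  intro b hb
  exact List.sum_pos b (fun y hy => pos_of_mem_flatten_of_mem_blockSeqs hlam hB y
    (List.mem_flatten_of_mem (List.dropLast_subset B hb) hy)) (hB.2.1 b hb).1

lemma card_cutSums (hlam : ∀ y ∈ lam, 0 < y) (hB : B ∈ blockSeqs m lam j) :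
    (cutSums B).card = j := by
  rw [cutSums, card_prefixSums (sum_pos_of_mem_blockSeqs hlam hB), List.length_map,
    List.length_dropLast, hB.1, Nat.add_sub_cancel]

lemma dvd_of_mem_cutSums (hB : B ∈ blockSeqs m lam j) : ∀ s ∈ cutSums B, m ∣ s :=
  forall_mem_prefixSums_dvd_iff.2 (List.forall_mem_map.2 fun b hb => (hB.2.1 b hb).2)

lemma cutSums_subset_prefixSums_flatten (hB : B ∈ blockSeqs m lam j) :
    cutSums B ⊆ prefixSums B.flatten := by
  obtain ⟨D, x, rfl⟩ := exists_eq_concat_of_mem_blockSeqs hB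
  rw [cutSums_concat, List.flatten_concat]
  exact prefixSums_map_sum_subset (fun b hb => ((concat_mem_blockSeqs.1 hB).2.1 b hb).1) x

lemma eq_of_cutSums_eq_of_flatten_eq (hlam : ∀ y ∈ lam, 0 < y) (hB : B ∈ blockSeqs m lam j)
    (hB' : B' ∈ blockSeqs m lam j) (hcut : cutSums B = cutSums B')
    (hflat : B.flatten = B'.flatten) : B = B' := by
  have hsum := eq_of_prefixSums_eq (sum_pos_of_mem_blockSeqs hlam hB)
    (sum_pos_of_mem_blockSeqs hlam hB') hcut
  have hpos := pos_of_mem_flatten_of_mem_blockSeqs hlam hB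
  obtain ⟨D, x, rfl⟩ := exists_eq_concat_of_mem_blockSeqs hB
  obtain ⟨D', x', rfl⟩ := exists_eq_concat_of_mem_blockSeqs hB'
  simp only [List.dropLast_concat, List.flatten_concat] at hsum hpos hflat
  obtain ⟨rfl, rfl⟩ := flatten_append_inj_of_map_sum_eq hpos hflat hsum
  rfl

lemma exists_mem_blockSeqs_cutSums_eq {μ : List ℕ} {U : Finset ℕ} (hlam : ∀ y ∈ lam, 0 < y)
    (hμ : μ.Perm lam) (hU : U ⊆ prefixSums μ) (hdvd : ∀ s ∈ U, m ∣ s) :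
    ∃ B ∈ blockSeqs m lam U.card, cutSums B = U ∧ B.flatten = μ := by
  have hμpos : ∀ y ∈ μ, 0 < y := fun y hy => hlam y (hμ.mem_iff.1 hy)
  obtain ⟨a, ha, rfl⟩ := exists_prefixSums_eq U fun s hs => pos_of_mem_prefixSums hμpos (hU hs)
  obtain ⟨D, x, hD, rfl, rfl⟩ := exists_flatten_append_eq ha hU
  have hlength : D.length = (prefixSums (D.map List.sum)).card := by
    rw [card_prefixSums ha, List.length_map]
  have hDdvd := List.forall_mem_map.1 (forall_mem_prefixSums_dvd_iff.1 hdvd)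
  exact ⟨D ++ [x], concat_mem_blockSeqs.2 ⟨hlength, fun b hb => ⟨hD b hb, hDdvd b hb⟩, hμ⟩,
    cutSums_concat D x, List.flatten_concat⟩

lemma bijOn_flatten_blockSeqs {U : Finset ℕ} (hlam : ∀ y ∈ lam, 0 < y) (hdvd : ∀ s ∈ U, m ∣ s) :
    Set.BijOn List.flatten {B ∈ blockSeqs m lam U.card | cutSums B = U}
      {μ | μ.Perm lam ∧ U ⊆ prefixSums μ} := by
  refine ⟨?_, ?_, ?_⟩
  · rintro B ⟨hB, rfl⟩
    exact ⟨hB.2.2, cutSums_subset_prefixSums_flatten hB⟩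
  · rintro B ⟨hB, hcut⟩ B' ⟨hB', hcut'⟩ hflat
    exact eq_of_cutSums_eq_of_flatten_eq hlam hB hB' (hcut.trans hcut'.symm) hflat
  · rintro μ ⟨hμ, hU⟩
    obtain ⟨B, hB, hcut, hflat⟩ := exists_mem_blockSeqs_cutSums_eq hlam hμ hU hdvd
    exact ⟨B, ⟨hB, hcut⟩, hflat⟩

lemma mapsTo_cutSums_blockSeqs (hlam : ∀ y ∈ lam, 0 < y) :
    Set.MapsTo cutSums (blockSeqs m lam j)
      (Finset.powersetCard j {s ∈ Finset.Icc 1 lam.sum | m ∣ s}) := by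
  intro B hB
  refine Finset.mem_powersetCard.2 ⟨fun s hs => ?_, card_cutSums hlam hB⟩
  have hsB := cutSums_subset_prefixSums_flatten hB hs
  have hpos : 0 < s := pos_of_mem_prefixSums (pos_of_mem_flatten_of_mem_blockSeqs hlam hB) hsB
  have hle : s ≤ lam.sum := hB.2.2.sum_eq ▸ le_sum_of_mem_prefixSums hsB
  exact Finset.mem_filter.2 ⟨Finset.mem_Icc.2 ⟨hpos, hle⟩, dvd_of_mem_cutSums hB s hs⟩

lemma finite_blockSeqs (hlam : ∀ y ∈ lam, 0 < y) : (blockSeqs m lam j).Finite := by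
  have hmaps : Set.MapsTo (fun B => (cutSums B, B.flatten)) (blockSeqs m lam j)
      ((Finset.powersetCard j {s ∈ Finset.Icc 1 lam.sum | m ∣ s} : Set (Finset ℕ)) ×ˢ
        {μ | μ.Perm lam}) :=
    fun B hB => ⟨mapsTo_cutSums_blockSeqs hlam hB, hB.2.2⟩
  have hinj : Set.InjOn (fun B => (cutSums B, B.flatten)) (blockSeqs m lam j) :=
    fun B hB B' hB' h =>
      eq_of_cutSums_eq_of_flatten_eq hlam hB hB' (Prod.ext_iff.1 h).1 (Prod.ext_iff.1 h).2
  exact .of_injOn hmaps hinj ((Finset.finite_toSet _).prod (finite_setOf_perm lam))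

theorem sum_ncard_prefixSums_eq_ncard_blockSeqs (hm : 0 < m) (hlam : ∀ y ∈ lam, 0 < y) (j : ℕ) :
    ∑ T ∈ Finset.powersetCard j (Finset.Icc 1 (lam.sum / m)),
        {μ : List ℕ | μ.Perm lam ∧ ∀ i ∈ T, m * i ∈ prefixSums μ}.ncard =
      (blockSeqs m lam j).ncard := by
  calc
    _ = ∑ U ∈ Finset.powersetCard j {s ∈ Finset.Icc 1 lam.sum | m ∣ s},
          {μ : List ℕ | μ.Perm lam ∧ U ⊆ prefixSums μ}.ncard := by
      rw [← map_mul_Icc_div hm, Finset.powersetCard_map, Finset.sum_map]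
      simp [Finset.subset_iff]
    _ = ∑ U ∈ Finset.powersetCard j {s ∈ Finset.Icc 1 lam.sum | m ∣ s},
          {B ∈ blockSeqs m lam j | cutSums B = U}.ncard := by
      refine Finset.sum_congr rfl fun U hU => ?_
      obtain ⟨hsub, rfl⟩ := Finset.mem_powersetCard.1 hU
      have hdvd : ∀ s ∈ U, m ∣ s := fun s hs => (Finset.mem_filter.1 (hsub hs)).2
      exact (bijOn_flatten_blockSeqs hlam hdvd).ncard_eq.symm
    _ = (blockSeqs m lam j).ncard :=
      (ncard_eq_sum_ncard_fiberwise (finite_blockSeqs hlam) (mapsTo_cutSums_blockSeqs hlam)).symm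

end BlockSeqs

section Sorting

/-- The weakly decreasing rearrangement of `l`: the type of `l` when `l` is a composition. -/
def sortDesc (l : List ℕ) : List ℕ := l.insertionSort (· ≥ ·)

lemma sortDesc_perm (l : List ℕ) : (sortDesc l).Perm l := List.perm_insertionSort _ l

lemma sortDesc_eq_iff {a b : List ℕ} (ha : a.Pairwise (· ≥ ·)) : sortDesc b = a ↔ b.Perm a where
  mp h := h ▸ (sortDesc_perm b).symm
  mpr h := ((sortDesc_perm b).trans h).eq_of_pairwise' (List.pairwise_insertionSort _ b) ha

lemma ncard_setOf_map_sortDesc_eq {A : List (List ℕ)} (hA : ∀ a ∈ A, a.Pairwise (· ≥ ·)) :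
    {B : List (List ℕ) | B.map sortDesc = A}.ncard = cAprod A := by
  induction A with
  | nil => simp [cAprod]
  | cons a A ih =>
    obtain ⟨ha, hA⟩ := List.forall_mem_cons.1 hA
    have hfiber : {B : List (List ℕ) | B.map sortDesc = a :: A} =
        (fun p : List ℕ × List (List ℕ) => p.1 :: p.2) ''
          ({b | b.Perm a} ×ˢ {B | B.map sortDesc = A}) := by
      ext B
      simp only [Set.mem_ofPred_eq, List.map_eq_cons_iff, sortDesc_eq_iff ha, Set.mem_image,
        Set.mem_prod, Prod.exists]
      grind
    have hinj : Function.Injective fun p : List ℕ × List (List ℕ) => p.1 :: p.2 :=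
      fun p q h => Prod.ext (List.cons.inj h).1 (List.cons.inj h).2
    rw [hfiber, Set.ncard_image_of_injective _ hinj, Set.ncard_prod,
      ncard_setOf_perm_eq_numComp, ih hA, cAprod, cAprod, List.map_cons, List.prod_cons]

variable {m j : ℕ} {lam : List ℕ} {A B : List (List ℕ)}

lemma flatten_map_sortDesc_perm (B : List (List ℕ)) :
    (B.map sortDesc).flatten.Perm B.flatten :=
  .flatten_congr <| List.forall₂_map_left_iff.2 <| List.forall₂_same.2 fun b _ => sortDesc_perm b

lemma map_sortDesc_mem_blockSeqs : B.map sortDesc ∈ blockSeqs m lam j ↔ B ∈ blockSeqs m lam j := by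
  have hne (b : List ℕ) : sortDesc b ≠ [] ↔ b ≠ [] := by
    rw [← List.length_pos_iff, (sortDesc_perm b).length_eq, List.length_pos_iff]
  simp only [blockSeqs, Set.mem_ofPred_eq, List.length_map, ← List.map_dropLast,
    List.forall_mem_map, hne, (sortDesc_perm _).sum_eq,
    (flatten_map_sortDesc_perm B).congr_left lam]

lemma wmem_and_length_eq_iff :
    Wmem m lam A ∧ A.length = j + 1 ↔ A ∈ blockSeqs m lam j ∧ ∀ a ∈ A, IsPartitionL a := by
  refine ⟨fun ⟨⟨_, hpart, hdvd, hperm⟩, hlen⟩ => ⟨⟨hlen, hdvd, hperm⟩, hpart⟩,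
    fun ⟨⟨hlen, hdvd, hperm⟩, hpart⟩ => ⟨⟨?_, hpart, hdvd, hperm⟩, hlen⟩⟩
  exact List.ne_nil_of_length_eq_add_one hlen

lemma isPartitionL_of_mem_map_sortDesc (hlam : ∀ y ∈ lam, 0 < y) (hB : B ∈ blockSeqs m lam j) :
    ∀ a ∈ B.map sortDesc, IsPartitionL a := by
  refine List.forall_mem_map.2 fun b hb => ⟨List.pairwise_insertionSort _ b, fun y hy => ?_⟩
  exact pos_of_mem_flatten_of_mem_blockSeqs hlam hB y
    (List.mem_flatten_of_mem hb ((sortDesc_perm b).mem_iff.1 hy))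

theorem ncard_blockSeqs_eq_finsum_cAprod (hlam : ∀ y ∈ lam, 0 < y) :
    (blockSeqs m lam j).ncard =
      ∑ᶠ A ∈ {A : List (List ℕ) | Wmem m lam A ∧ A.length = j + 1}, cAprod A := by
  have hfin : {A : List (List ℕ) | Wmem m lam A ∧ A.length = j + 1}.Finite :=
    (finite_blockSeqs hlam).subset fun A hA => (wmem_and_length_eq_iff.1 hA).1
  rw [finsum_mem_eq_finite_toFinset_sum _ hfin,
    ncard_eq_sum_ncard_fiberwise (finite_blockSeqs hlam) (t := hfin.toFinset)
      (f := List.map sortDesc)]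
  · refine Finset.sum_congr rfl fun A hA => ?_
    obtain ⟨hAS, hpart⟩ := wmem_and_length_eq_iff.1 (hfin.mem_toFinset.1 hA)
    rw [← ncard_setOf_map_sortDesc_eq fun a ha => (hpart a ha).1]
    congr 1 with B
    exact and_iff_right_of_imp fun (h : B.map sortDesc = A) =>
      map_sortDesc_mem_blockSeqs.1 (h ▸ hAS)
  · intro B hB
    exact hfin.mem_toFinset.2 (wmem_and_length_eq_iff.2
      ⟨map_sortDesc_mem_blockSeqs.2 hB, isPartitionL_of_mem_map_sortDesc hlam hB⟩)

end Sorting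

lemma iInter_setOf_perm_prefixSum {T : Finset ℕ} (hT : T.Nonempty) (m : ℕ) (lam : List ℕ) :
    ⋂ i ∈ T, {μ : List ℕ |
        List.Perm μ lam ∧ ∃ r, 1 ≤ r ∧ r ≤ lam.length ∧ (μ.take r).sum = m * i} =
      {μ | μ.Perm lam ∧ ∀ i ∈ T, m * i ∈ prefixSums μ} := by
  ext μ
  simp only [Set.mem_iInter, Set.mem_ofPred_eq, mem_prefixSums]
  constructor
  · intro h
    have hperm : μ.Perm lam := (h _ hT.choose_spec).1
    exact ⟨hperm, fun i hi => hperm.length_eq ▸ (h i hi).2⟩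
  · rintro ⟨hperm, h⟩ i hi
    exact ⟨hperm, hperm.length_eq ▸ h i hi⟩

theorem stmt6 {m : ℕ} (hm : 0 < m) {n : ℕ} (lam : List ℕ) (hlam : IsPartitionL lam)
    (hn : lam.sum = n) (j : ℕ) (hj1 : 1 ≤ j) (hjb : j ≤ n / m) :
    ∑ T ∈ Finset.powersetCard j (Finset.Icc 1 (n / m)),
        Nat.card ↥(⋂ i ∈ T, {μ : List ℕ |
          List.Perm μ lam ∧ ∃ r, 1 ≤ r ∧ r ≤ lam.length ∧ (μ.take r).sum = m * i}) =
      ∑ᶠ A ∈ {A : List (List ℕ) | Wmem m lam A ∧ A.length = j + 1}, cAprod A := by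
  subst hn
  rw [← ncard_blockSeqs_eq_finsum_cAprod hlam.2,
    ← sum_ncard_prefixSums_eq_ncard_blockSeqs hm hlam.2]
  refine Finset.sum_congr rfl fun T hT => ?_
  have hTne : T.Nonempty := Finset.card_pos.1 ((Finset.mem_powersetCard.1 hT).2 ▸ hj1)
  rw [Nat.card_coe_set_eq, iInter_setOf_perm_prefixSum hTne]
end
end
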